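/- In the simplified model, the pre-averaged noise satisfies: (i) there are constants C > 0 and N such that for all n ≥ N and all 2 ≤ i, k ≤ m with |i − k| ≥ 2, |E[ε̄_{i,m} ε̄_{k,m}]| ≤ C/n; and (ii) there are constants C > 0 and N such that for all n ≥ N and all 2 ≤ i ≤ m, |E[ε̄_{i,m}²] − τ²(m/n)∫₀² λ(u)² du| ≤ C/n. -/

import Mathlib

open MeasureTheory ProbabilityTheory Real

noncomputable section

/-- `Λ(u) = -∫₀ᵘ λ(v) dv`. -/
def bigLam (lam : ℝ → ℝ) (u : ℝ) : ℝ := -∫ v in (0:ℝ)..u, lam v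

/-- A (normalized) pre-average function: piecewise Lipschitz on `[0,2]`,
antisymmetric about `1`, and normalized. -/
structure IsPreAverageFn (lam : ℝ → ℝ) : Prop where
  piecewise_lipschitz : ∃ (N : ℕ) (t : ℕ → ℝ) (K : NNReal),
      0 < N ∧ t 0 = 0 ∧ t N = 2 ∧ (∀ i < N, t i < t (i + 1)) ∧
      ∀ i < N, LipschitzOnWith K lam (Set.Ioo (t i) (t (i + 1)))
  antisymm : ∀ t ∈ Set.Icc (0:ℝ) 1, lam t = - lam (2 - t)
  normalized : Real.sqrt (2 * ∫ s in (0:ℝ)..1, (∫ u in (0:ℝ)..s, lam u) ^ 2) = 1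

/-- `m = n / ⌊√n / c⌋`. -/
def mOf (c : ℝ) (n : ℕ) : ℕ := n / ⌊Real.sqrt n / c⌋₊

/-- The indices `j` with `j/n ∈ [(i-2)/m , i/m]`. -/
def blockIdx (n m i : ℕ) : Finset ℕ :=
  (Finset.range (n + 1)).filter fun j =>
    ((i : ℝ) - 2) / m ≤ (j : ℝ) / n ∧ (j : ℝ) / n ≤ (i : ℝ) / m

variable {Ω : Type*}

/-- Pre-averaged value `Ā_{i,m} = (m/n) ∑_{j/n ∈ [(i-2)/m, i/m]} λ(m j/n - (i-2)) A_j`. -/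
def preAvg (lam : ℝ → ℝ) (n m : ℕ) (A : ℕ → Ω → ℝ) (i : ℕ) (ω : Ω) : ℝ :=
  ((m : ℝ) / n) * ∑ j ∈ blockIdx n m i,
    lam ((m : ℝ) * j / n - ((i : ℝ) - 2)) * A j ω

/-- Bias correction `𝔟(λ, A)_{i,m}`. -/
def biasCorr (lam : ℝ → ℝ) (n m : ℕ) (A : ℕ → Ω → ℝ) (i : ℕ) (ω : Ω) : ℝ :=
  ((m : ℝ) ^ 2 / (2 * (n : ℝ) ^ 2)) * ∑ j ∈ (blockIdx n m i).filter (fun j => 1 ≤ j),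
    (lam ((m : ℝ) * j / n - ((i : ℝ) - 2))) ^ 2 * (A j ω - A (j - 1) ω) ^ 2

/-- The simplified model: `(W_{j/n})_j` and `(η_{j,n})_j` form a centered jointly Gaussian
family with `Cov(W_{j/n}, W_{l/n}) = min(j,l)/n`, `(η_{j,n})` standard Gaussian i.i.d.
and uncorrelated with the `W` grid values. -/
def IsSimplifiedModel [MeasureSpace Ω] (n : ℕ) (W η : ℕ → Ω → ℝ) : Prop :=
  (∀ j, Measurable (W j)) ∧ (∀ j, Measurable (η j)) ∧
  (∀ a b : ℕ → ℝ, ∃ v : NNReal,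
    Measure.map (fun ω => ∑ j ∈ Finset.range (n + 1), (a j * W j ω + b j * η j ω)) ℙ
      = gaussianReal 0 v) ∧
  (∀ j l, j ≤ n → l ≤ n → ∫ ω, W j ω * W l ω = (min j l : ℝ) / n) ∧
  (∀ j l, j ≤ n → l ≤ n → ∫ ω, η j ω * η l ω = if j = l then 1 else 0) ∧
  (∀ j l, j ≤ n → l ≤ n → ∫ ω, W j ω * η l ω = 0)

/-- The observations `Y_{j,n} = σ W_{j/n} + τ η_{j,n}`. -/
def obs (σ τ : ℝ) (W η : ℕ → Ω → ℝ) (j : ℕ) (ω : Ω) : ℝ := σ * W j ω + τ * η j ω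

end

/-!
Since the noise is white,
`E[ε̄ᵢ ε̄ₖ] = τ² (m/n)² ∑ⱼ λ(m j / n - (i - 2)) λ(m j / n - (k - 2))`,
where `j` ranges over the common indices of the two blocks, and `(m/n)² = O(1/n)`. Blocks with
`|i - k| ≥ 2` have at most one common index and `λ` is bounded, which gives (i). For `i = k`,
`(m/n) ∑ⱼ λ(m j / n - (i - 2))²` is a Riemann sum of `λ²` with mesh `m/n`, and for a function of
bounded variation such a sum differs from the integral by at most the mesh times the total
variation, which gives (ii). The grid need not hit the endpoints `0` and `2`, so the Riemann sum is
taken for the extension of `λ²` by zero, whose jumps at `0` and `2` only add to the variation.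
-/

section BoundedVariation

open Set

variable {α E : Type*} [LinearOrder α] [PseudoMetricSpace E]

theorem eVariationOn_union_le (f : α → E) {s t : Set α} (hst : ∀ x ∈ s, ∀ y ∈ t, x ≤ y)
    {x y : α} (hx : x ∈ s) (hy : y ∈ t) :
    eVariationOn f (s ∪ t) ≤
      2 * eVariationOn f s + edist (f x) (f y) + 2 * eVariationOn f t := by
  have h_bound : 2 * eVariationOn f s + edist (f x) (f y) + 2 * eVariationOn f t =
      eVariationOn f s + (eVariationOn f s + edist (f x) (f y) + eVariationOn f t) +
        eVariationOn f t := by ring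
  rw [h_bound]
  refine iSup_le fun ⟨n, u, hu, u_mem⟩ ↦ ?_
  set v := u '' Iic n
  have hv : v = (v ∩ s) ∪ (v ∩ t) := by
    rw [← inter_union_distrib_left, left_eq_inter]
    exact image_subset_iff.2 fun i _ ↦ u_mem i
  have hs : eVariationOn f (v ∩ s) ≤ eVariationOn f s := eVariationOn.mono f inter_subset_right
  have ht : eVariationOn f (v ∩ t) ≤ eVariationOn f t := eVariationOn.mono f inter_subset_right
  have v_finite : v.Finite := (finite_Iic n).image u
  simp only [edist_comm (f (u (_ + 1)))]
  rw [← eVariationOn.image_range_of_monotone f hu n]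
  change eVariationOn f v ≤ _
  rcases (v ∩ s).eq_empty_or_nonempty with h | hs_ne
  · rw [hv, h, empty_union]
    exact ht.trans le_add_self
  rcases (v ∩ t).eq_empty_or_nonempty with h | ht_ne
  · rw [hv, h, union_empty]
    exact hs.trans (le_self_add.trans le_self_add)
  obtain ⟨p, hp, hp_max⟩ := exists_max_image (v ∩ s) id (v_finite.inter_of_left s) hs_ne
  obtain ⟨q, hq, hq_min⟩ := exists_min_image (v ∩ t) id (v_finite.inter_of_left t) ht_ne
  have hpq : edist (f p) (f q) ≤ eVariationOn f s + edist (f x) (f y) + eVariationOn f t :=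
    (edist_triangle4 _ (f x) (f y) _).trans <| add_le_add_left
      (add_le_add_left (eVariationOn.edist_le f hp.2 hx) _) _ |>.trans <|
        add_le_add_right (eVariationOn.edist_le f hy hq.2) _
  rw [hv, eVariationOn.union' f ⟨hp, hp_max⟩ ⟨hq, hq_min⟩ (hst p hp.2 q hq.2)]
  gcongr

theorem boundedVariationOn_union {f : α → E} {s t : Set α} (hs : BoundedVariationOn f s)
    (ht : BoundedVariationOn f t) (hst : ∀ x ∈ s, ∀ y ∈ t, x ≤ y) :
    BoundedVariationOn f (s ∪ t) := by
  rcases s.eq_empty_or_nonempty with rfl | ⟨x, hx⟩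
  · rwa [empty_union]
  rcases t.eq_empty_or_nonempty with rfl | ⟨y, hy⟩
  · rwa [union_empty]
  unfold BoundedVariationOn at hs ht
  exact ne_top_of_le_ne_top (by finiteness) (eVariationOn_union_le f hst hx hy)

theorem boundedVariationOn_Icc_of_Ioo {f : α → E} {a b : α}
    (hf : BoundedVariationOn f (Ioo a b)) : BoundedVariationOn f (Icc a b) := by
  rcases lt_or_ge a b with hab | hba
  · have h_left : BoundedVariationOn f ({a} ∪ Ioo a b) :=
      boundedVariationOn_union (.of_subsingleton subsingleton_singleton) hf (by grind)
    exact (boundedVariationOn_union h_left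
      (.of_subsingleton (subsingleton_singleton (a := b))) (by grind)).mono (by grind)
  · exact .of_subsingleton (subsingleton_Icc_of_ge hba)

theorem boundedVariationOn_Icc_of_forall_Icc {f : α → E} {t : ℕ → α} {n : ℕ}
    (hf : ∀ i < n, BoundedVariationOn f (Icc (t i) (t (i + 1)))) :
    BoundedVariationOn f (Icc (t 0) (t n)) := by
  induction n with
  | zero => exact .of_subsingleton (by simp)
  | succ n ih =>
    exact (boundedVariationOn_union (ih fun i hi ↦ hf i (by omega))
      (hf n n.lt_succ_self) fun x hx y hy ↦ hx.2.trans hy.1).mono Icc_subset_Icc_union_Icc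

theorem boundedVariationOn_indicator_Icc [Zero E] {f : α → E} {a b : α}
    (hf : BoundedVariationOn f (Icc a b)) :
    BoundedVariationOn ((Icc a b).indicator f) univ := by
  set g := (Icc a b).indicator f
  have hg_zero {s : Set α} (hs : Disjoint s (Icc a b)) : BoundedVariationOn g s := by
    have hg : EqOn g (fun _ ↦ 0) s := fun x hx ↦ indicator_of_notMem (disjoint_left.1 hs hx) f
    rw [BoundedVariationOn, eVariationOn.congr hg,
      eVariationOn.constant_on (by grind [Set.Subsingleton])]
    exact ENNReal.zero_ne_top
  have hg_Icc : BoundedVariationOn g (Icc a b) := by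
    rwa [BoundedVariationOn, eVariationOn.congr eqOn_indicator]
  have h_left : BoundedVariationOn g (Iio a ∪ Icc a b) :=
    boundedVariationOn_union (hg_zero (by grind)) hg_Icc (by grind)
  exact (boundedVariationOn_union h_left (hg_zero (s := Ioi b \ Iio a) (by grind)) (by grind)).mono
    (by grind)

theorem isBounded_image_of_boundedVariationOn {f : α → E} {s : Set α}
    (hf : BoundedVariationOn f s) : Bornology.IsBounded (f '' s) :=
  Metric.isBounded_iff.2 ⟨(eVariationOn f s).toReal, by
    rintro _ ⟨x, hx, rfl⟩ _ ⟨y, hy, rfl⟩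
    exact hf.dist_le hx hy⟩

end BoundedVariation

section RiemannSum

open Set

theorem intervalIntegrable_of_boundedVariationOn {f : ℝ → ℝ} {a b : ℝ}
    (hf : BoundedVariationOn f (uIcc a b)) : IntervalIntegrable f volume a b := by
  obtain ⟨p, q, hp, hq, rfl⟩ := hf.locallyBoundedVariationOn.exists_monotoneOn_sub_monotoneOn
  exact hp.intervalIntegrable.sub hq.intervalIntegrable

theorem abs_length_mul_sub_integral_le {f : ℝ → ℝ} {a b c : ℝ} (hc : c ∈ Icc a b)
    (hf : BoundedVariationOn f (Icc a b)) :
    |(b - a) * f c - ∫ u in a..b, f u| ≤ (b - a) * (eVariationOn f (Icc a b)).toReal := by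
  have hab : a ≤ b := hc.1.trans hc.2
  have hf_int : IntervalIntegrable f volume a b :=
    intervalIntegrable_of_boundedVariationOn (by rwa [uIcc_of_le hab])
  have h_eq : (b - a) * f c - ∫ u in a..b, f u = ∫ u in a..b, (f c - f u) := by
    rw [intervalIntegral.integral_sub intervalIntegrable_const hf_int,
      intervalIntegral.integral_const, smul_eq_mul]
  rw [h_eq, ← norm_eq_abs, mul_comm, ← abs_of_nonneg (sub_nonneg.2 hab)]
  refine intervalIntegral.norm_integral_le_of_norm_le_const fun u hu ↦ ?_
  rw [uIoc_of_le hab] at hu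
  exact hf.dist_le hc (Ioc_subset_Icc_self hu)

theorem abs_riemannSum_sub_integral_le {f : ℝ → ℝ} {t ξ : ℕ → ℝ} {k : ℕ} {h : ℝ}
    (ht : Monotone t) (hξ : ∀ j < k, ξ j ∈ Icc (t j) (t (j + 1)))
    (h_mesh : ∀ j < k, t (j + 1) - t j ≤ h) (hf : BoundedVariationOn f (Icc (t 0) (t k))) :
    |∑ j ∈ Finset.range k, (t (j + 1) - t j) * f (ξ j) - ∫ u in t 0..t k, f u| ≤
      h * (eVariationOn f (Icc (t 0) (t k))).toReal := by
  have hf_cell : ∀ j < k, BoundedVariationOn f (Icc (t j) (t (j + 1))) := fun j hj ↦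
    hf.mono (Icc_subset_Icc (ht j.zero_le) (ht hj))
  have hf_int : ∀ j < k, IntervalIntegrable f volume (t j) (t (j + 1)) := fun j hj ↦
    intervalIntegrable_of_boundedVariationOn <| by
      rw [uIcc_of_le (ht j.le_succ)]
      exact hf_cell j hj
  calc |∑ j ∈ Finset.range k, (t (j + 1) - t j) * f (ξ j) - ∫ u in t 0..t k, f u|
      = |∑ j ∈ Finset.range k,
          ((t (j + 1) - t j) * f (ξ j) - ∫ u in t j..t (j + 1), f u)| := by
        rw [Finset.sum_sub_distrib, intervalIntegral.sum_integral_adjacent_intervals hf_int]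
    _ ≤ ∑ j ∈ Finset.range k, h * (eVariationOn f (Icc (t j) (t (j + 1)))).toReal := by
        refine (Finset.abs_sum_le_sum_abs _ _).trans (Finset.sum_le_sum fun j hj ↦ ?_)
        have hj := Finset.mem_range.1 hj
        exact (abs_length_mul_sub_integral_le (hξ j hj) (hf_cell j hj)).trans
          (mul_le_mul_of_nonneg_right (h_mesh j hj) ENNReal.toReal_nonneg)
    _ = h * (eVariationOn f (Icc (t 0) (t k))).toReal := by
        rw [← Finset.mul_sum, ← ENNReal.toReal_sum fun j hj ↦ hf_cell j (Finset.mem_range.1 hj),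
          eVariationOn.sum' f ht]

theorem intervalIntegral_indicator_Icc {F : Type*} [NormedAddCommGroup F] [NormedSpace ℝ F]
    {f : ℝ → F} {a b x y : ℝ} (hxa : x ≤ a) (hab : a ≤ b) (hby : b ≤ y) :
    ∫ u in x..y, (Icc a b).indicator f u = ∫ u in a..b, f u := by
  rw [intervalIntegral.integral_of_le (hxa.trans (hab.trans hby)), ← integral_Icc_eq_integral_Ioc,
    setIntegral_indicator measurableSet_Icc, inter_eq_self_of_subset_right (Icc_subset_Icc hxa hby),
    integral_Icc_eq_integral_Ioc, ← intervalIntegral.integral_of_le hab]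

theorem abs_mul_sum_indicator_sub_integral_le {f : ℝ → ℝ} {a b x h : ℝ} {k : ℕ}
    (hf : BoundedVariationOn f (Icc a b)) (hab : a ≤ b) (hh : 0 ≤ h) (hx : x ≤ a)
    (hk : b ≤ x + h * k) :
    |h * ∑ j ∈ Finset.range k, (Icc a b).indicator f (x + h * j) - ∫ u in a..b, f u| ≤
      h * (eVariationOn ((Icc a b).indicator f) univ).toReal := by
  set g := (Icc a b).indicator f
  set t : ℕ → ℝ := fun j ↦ x + h * j
  have ht : Monotone t := fun i j hij ↦ by simp only [t]; gcongr
  have ht_step : ∀ j, t (j + 1) - t j = h := fun j ↦ by simp only [t]; push_cast; ring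
  have hg : BoundedVariationOn g univ := boundedVariationOn_indicator_Icc hf
  have h_riemann := abs_riemannSum_sub_integral_le (k := k) ht
    (fun j _ ↦ left_mem_Icc.2 (ht j.le_succ)) (fun j _ ↦ (ht_step j).le) (hg.mono (subset_univ _))
  have h_int : ∫ u in t 0..t k, g u = ∫ u in a..b, f u :=
    intervalIntegral_indicator_Icc (by simpa [t] using hx) hab hk
  simp only [ht_step, ← Finset.mul_sum, h_int] at h_riemann
  refine h_riemann.trans (mul_le_mul_of_nonneg_left ?_ hh)
  exact ENNReal.toReal_mono hg (eVariationOn.mono g (subset_univ _))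

end RiemannSum

section WhiteNoise

/-- White noise on the index set `s`: square-integrable variables `η i`, `i ∈ s`, that are
orthonormal in `L²(μ)`. This is all that second moments of linear combinations of the noise
depend on. -/
structure IsWhiteNoiseOn {ι Ω : Type*} [MeasurableSpace Ω] (η : ι → Ω → ℝ) (s : Set ι)
    (μ : Measure Ω) : Prop where
  memLp_two : ∀ i ∈ s, MemLp (η i) 2 μ
  integral_sq : ∀ i ∈ s, ∫ ω, η i ω ^ 2 ∂μ = 1
  integral_mul_eq_zero : ∀ i ∈ s, ∀ j ∈ s, i ≠ j → ∫ ω, η i ω * η j ω ∂μ = 0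

theorem IsWhiteNoiseOn.integral_sum_mul_sum {ι Ω : Type*} [DecidableEq ι] [MeasurableSpace Ω]
    {μ : Measure Ω} {η : ι → Ω → ℝ} {s : Set ι} (hη : IsWhiteNoiseOn η s μ) {A B : Finset ι}
    (hA : ↑A ⊆ s) (hB : ↑B ⊆ s) (a b : ι → ℝ) :
    ∫ ω, (∑ i ∈ A, a i * η i ω) * ∑ j ∈ B, b j * η j ω ∂μ = ∑ i ∈ A ∩ B, a i * b i := by
  have h_integrable : ∀ i ∈ A, ∀ j ∈ B,
      Integrable (fun ω ↦ a i * η i ω * (b j * η j ω)) μ := fun i hi j hj ↦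
    ((hη.memLp_two i (hA hi)).const_mul _).integrable_mul ((hη.memLp_two j (hB hj)).const_mul _)
  have h_cov : ∀ i ∈ A, ∀ j ∈ B,
      ∫ ω, a i * η i ω * (b j * η j ω) ∂μ = if i = j then a i * b j else 0 := by
    intro i hi j hj
    have h_mul : ∀ ω, a i * η i ω * (b j * η j ω) = a i * b j * (η i ω * η j ω) :=
      fun ω ↦ mul_mul_mul_comm _ _ _ _
    simp only [h_mul, integral_const_mul]
    split_ifs with hij
    · subst hij
      simp only [← sq (η i _)]
      rw [hη.integral_sq i (hA hi), mul_one]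
    · rw [hη.integral_mul_eq_zero i (hA hi) j (hB hj) hij, mul_zero]
  simp only [Finset.sum_mul_sum]
  rw [integral_finsetSum _ fun i hi ↦ integrable_finsetSum _ (h_integrable i hi),
    ← Finset.sum_ite_mem]
  refine Finset.sum_congr rfl fun i hi ↦ ?_
  rw [integral_finsetSum _ (h_integrable i hi), Finset.sum_congr rfl (h_cov i hi),
    Finset.sum_ite_eq]

end WhiteNoise

section PreAveraging

open Set

/-- The position of the grid point `j / n` relative to the `i`-th block: its image under the affine
map that sends `[(i - 2) / m, i / m]` onto the domain `[0, 2]` of the pre-average function. -/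
noncomputable def blockCoord (n m i j : ℕ) : ℝ := (m : ℝ) * j / n - ((i : ℝ) - 2)

variable {n m i k : ℕ} {lam : ℝ → ℝ} {Ω : Type*} {η : ℕ → Ω → ℝ}

theorem mem_blockIdx_iff (hm : 0 < m) {j : ℕ} :
    j ∈ blockIdx n m i ↔ j ≤ n ∧ blockCoord n m i j ∈ Icc 0 2 := by
  have hm' : (0 : ℝ) < m := by exact_mod_cast hm
  rw [blockIdx, Finset.mem_filter, Finset.mem_range, Nat.lt_succ_iff, blockCoord, mem_Icc,
    div_le_iff₀' hm', le_div_iff₀' hm', mul_div_assoc, sub_nonneg,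
    sub_le_iff_le_add (c := (i : ℝ) - 2), add_sub_cancel]

theorem coe_blockIdx_subset_Iic : (blockIdx n m i : Set ℕ) ⊆ Iic n := fun _ hj ↦
  Nat.lt_succ_iff.1 (Finset.mem_range.1 (Finset.mem_filter.1 hj).1)

theorem card_blockIdx_inter_blockIdx_le_one (hn : 0 < n) (hm : 0 < m) (hik : i + 2 ≤ k) :
    (blockIdx n m i ∩ blockIdx n m k).card ≤ 1 := by
  have hn' : (n : ℝ) ≠ 0 := by positivity
  have hm' : (m : ℝ) ≠ 0 := by positivity
  have hik' : (i : ℝ) + 2 ≤ k := by exact_mod_cast hik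
  have h_eq : ∀ j ∈ blockIdx n m i ∩ blockIdx n m k, (m : ℝ) * j / n = i := by
    intro j hj
    rw [Finset.mem_inter, mem_blockIdx_iff hm, mem_blockIdx_iff hm] at hj
    have hi_le : blockCoord n m i j ≤ 2 := hj.1.2.2
    have hk_ge : 0 ≤ blockCoord n m k j := hj.2.2.1
    unfold blockCoord at hi_le hk_ge
    linarith
  refine Finset.card_le_one.2 fun j hj l hl ↦ ?_
  have h := (h_eq j hj).trans (h_eq l hl).symm
  rw [div_left_inj' hn', mul_right_inj' hm'] at h
  exact_mod_cast h

theorem abs_mul_sum_blockIdx_sub_integral_le {f : ℝ → ℝ} (hf : BoundedVariationOn f (Icc 0 2))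
    (hn : 0 < n) (hm : 0 < m) (hi : 2 ≤ i) (him : i ≤ m) :
    |(m / n : ℝ) * ∑ j ∈ blockIdx n m i, f (blockCoord n m i j) - ∫ u in (0 : ℝ)..2, f u| ≤
      (m / n : ℝ) * (eVariationOn ((Icc 0 2).indicator f) univ).toReal := by
  have hi' : (2 : ℝ) ≤ i := by exact_mod_cast hi
  have him' : (i : ℝ) ≤ m := by exact_mod_cast him
  have h_grid : ∀ j : ℕ, blockCoord n m i j = 2 - i + m / n * j := fun j ↦ by
    rw [blockCoord]; ring
  have h_last : (2 : ℝ) ≤ 2 - i + m / n * (n + 1 : ℕ) := by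
    have h_mul : (m / n * (n + 1 : ℕ) : ℝ) = m + m / n := by push_cast; field_simp
    have : (0 : ℝ) ≤ m / n := by positivity
    linarith
  have h_sum : ∑ j ∈ blockIdx n m i, f (blockCoord n m i j) =
      ∑ j ∈ Finset.range (n + 1), (Icc 0 2).indicator f (2 - i + m / n * j) := by
    have h_block : blockIdx n m i =
        (Finset.range (n + 1)).filter fun j ↦ blockCoord n m i j ∈ Icc (0 : ℝ) 2 := by
      ext j
      rw [mem_blockIdx_iff hm, Finset.mem_filter, Finset.mem_range, Nat.lt_succ_iff]
    rw [h_block, Finset.sum_filter]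
    simp only [indicator_apply, h_grid]
  rw [h_sum]
  exact abs_mul_sum_indicator_sub_integral_le hf zero_le_two (by positivity) (by linarith) h_last

theorem preAvg_const_mul_eq_sum (τ : ℝ) (ω : Ω) :
    preAvg lam n m (fun j ω ↦ τ * η j ω) i ω =
      ∑ j ∈ blockIdx n m i, τ * (m / n) * lam (blockCoord n m i j) * η j ω := by
  rw [preAvg, Finset.mul_sum]
  exact Finset.sum_congr rfl fun j _ ↦ by rw [blockCoord]; ring

variable [MeasurableSpace Ω] {μ : Measure Ω}

theorem integral_preAvg_mul_preAvg (hη : IsWhiteNoiseOn η (Iic n) μ) (τ : ℝ) :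
    ∫ ω, preAvg lam n m (fun j ω ↦ τ * η j ω) i ω * preAvg lam n m (fun j ω ↦ τ * η j ω) k ω ∂μ =
      (τ * (m / n)) ^ 2 * ∑ j ∈ blockIdx n m i ∩ blockIdx n m k,
        lam (blockCoord n m i j) * lam (blockCoord n m k j) := by
  simp only [preAvg_const_mul_eq_sum]
  rw [hη.integral_sum_mul_sum coe_blockIdx_subset_Iic coe_blockIdx_subset_Iic, Finset.mul_sum]
  exact Finset.sum_congr rfl fun j _ ↦ by ring

theorem abs_integral_preAvg_mul_preAvg_le (hη : IsWhiteNoiseOn η (Iic n) μ) {M : ℝ}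
    (hM : ∀ u ∈ Icc (0 : ℝ) 2, |lam u| ≤ M) (hn : 0 < n) (hm : 0 < m)
    (hik : 2 ≤ |(i : ℤ) - (k : ℤ)|) (τ : ℝ) :
    |∫ ω, preAvg lam n m (fun j ω ↦ τ * η j ω) i ω *
        preAvg lam n m (fun j ω ↦ τ * η j ω) k ω ∂μ| ≤ (τ * (m / n)) ^ 2 * M ^ 2 := by
  have h_card : ((blockIdx n m i ∩ blockIdx n m k).card : ℝ) ≤ 1 := by
    rcases le_abs.1 hik with h | h
    · rw [Finset.inter_comm]
      exact_mod_cast card_blockIdx_inter_blockIdx_le_one hn hm (by omega)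
    · exact_mod_cast card_blockIdx_inter_blockIdx_le_one hn hm (by omega)
  have h_term : ∀ j ∈ blockIdx n m i ∩ blockIdx n m k,
      |lam (blockCoord n m i j) * lam (blockCoord n m k j)| ≤ M ^ 2 := by
    intro j hj
    rw [Finset.mem_inter, mem_blockIdx_iff hm, mem_blockIdx_iff hm] at hj
    rw [abs_mul, sq]
    have hi_le := hM _ hj.1.2
    exact mul_le_mul hi_le (hM _ hj.2.2) (abs_nonneg _) ((abs_nonneg _).trans hi_le)
  rw [integral_preAvg_mul_preAvg hη, abs_mul, abs_of_nonneg (sq_nonneg _)]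
  gcongr
  calc |∑ j ∈ blockIdx n m i ∩ blockIdx n m k, lam (blockCoord n m i j) * lam (blockCoord n m k j)|
      ≤ (blockIdx n m i ∩ blockIdx n m k).card • M ^ 2 :=
        (Finset.abs_sum_le_sum_abs _ _).trans (Finset.sum_le_card_nsmul _ _ _ h_term)
    _ ≤ M ^ 2 := by
        rw [nsmul_eq_mul]
        exact mul_le_of_le_one_left (sq_nonneg M) h_card

theorem abs_integral_preAvg_sq_sub_le (hη : IsWhiteNoiseOn η (Iic n) μ)
    (hlam : BoundedVariationOn lam (Icc 0 2)) (hn : 0 < n) (hm : 0 < m) (hi : 2 ≤ i) (him : i ≤ m)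
    (τ : ℝ) :
    |∫ ω, preAvg lam n m (fun j ω ↦ τ * η j ω) i ω ^ 2 ∂μ -
        τ ^ 2 * (m / n) * ∫ u in (0 : ℝ)..2, lam u ^ 2| ≤
      (τ * (m / n)) ^ 2 *
        (eVariationOn ((Icc 0 2).indicator fun u ↦ lam u ^ 2) univ).toReal := by
  have hlam_sq : BoundedVariationOn (fun u ↦ lam u ^ 2) (Icc 0 2) := by
    simpa only [sq] using hlam.fun_mul hlam
  have h_riemann := abs_mul_sum_blockIdx_sub_integral_le hlam_sq hn hm hi him
  simp only [sq (preAvg _ _ _ _ _ _), integral_preAvg_mul_preAvg hη, Finset.inter_self]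
  simp only [← sq (lam _)]
  set S := ∑ j ∈ blockIdx n m i, lam (blockCoord n m i j) ^ 2
  set I := ∫ u in (0 : ℝ)..2, lam u ^ 2
  set V := (eVariationOn ((Icc 0 2).indicator fun u ↦ lam u ^ 2) univ).toReal
  calc |(τ * (m / n)) ^ 2 * S - τ ^ 2 * (m / n) * I|
      = τ ^ 2 * (m / n) * |m / n * S - I| := by
        have h_factor : (τ * (m / n)) ^ 2 * S - τ ^ 2 * (m / n) * I =
            τ ^ 2 * (m / n) * (m / n * S - I) := by ring
        rw [h_factor, abs_mul, abs_of_nonneg (by positivity)]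
    _ ≤ τ ^ 2 * (m / n) * (m / n * V) := by gcongr
    _ = (τ * (m / n)) ^ 2 * V := by ring

theorem sq_mOf_div_le {c : ℝ} (hc : 0 < c) (hcn : c ^ 2 ≤ n) :
    ((mOf c n : ℝ) / n) ^ 2 ≤ 4 * c ^ 2 / n := by
  have hn : (0 : ℝ) < n := (pow_pos hc 2).trans_le hcn
  set p := ⌊√n / c⌋₊
  have hp : (1 : ℝ) ≤ p := by
    have : 0 < p := Nat.floor_pos.2 ((one_le_div hc).2 (le_sqrt_of_sq_le hcn))
    exact_mod_cast this
  have h_floor : √n ≤ 2 * c * p := by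
    have : √n / c < p + 1 := Nat.lt_floor_add_one _
    rw [div_lt_iff₀ hc] at this
    nlinarith
  have h_mOf : (mOf c n : ℝ) * p ≤ n := by exact_mod_cast Nat.div_mul_le_self n p
  have h_mesh : (mOf c n : ℝ) / n ≤ 2 * c / √n := by
    rw [div_le_div_iff₀ hn (sqrt_pos.2 hn)]
    calc (mOf c n : ℝ) * √n ≤ mOf c n * (2 * c * p) := by gcongr
      _ = 2 * c * (mOf c n * p) := by ring
      _ ≤ 2 * c * n := by gcongr
  calc ((mOf c n : ℝ) / n) ^ 2 ≤ (2 * c / √n) ^ 2 := by gcongr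
    _ = 4 * c ^ 2 / n := by rw [div_pow, sq_sqrt hn.le]; ring

theorem sq_mul_mOf_div_mul_le {c A : ℝ} (hc : 0 < c) (hcn : c ^ 2 ≤ n) (hA : 0 ≤ A) (τ : ℝ) :
    (τ * (mOf c n / n)) ^ 2 * A ≤ (τ ^ 2 * (4 * c ^ 2) * A + 1) / n :=
  calc (τ * (mOf c n / n)) ^ 2 * A = τ ^ 2 * A * ((mOf c n : ℝ) / n) ^ 2 := by ring
    _ ≤ τ ^ 2 * A * (4 * c ^ 2 / n) := by gcongr; exact sq_mOf_div_le hc hcn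
    _ = τ ^ 2 * (4 * c ^ 2) * A / n := by ring
    _ ≤ (τ ^ 2 * (4 * c ^ 2) * A + 1) / n := by gcongr; exact le_add_of_nonneg_right zero_le_one

theorem IsPreAverageFn.boundedVariationOn (hlam : IsPreAverageFn lam) :
    BoundedVariationOn lam (Icc 0 2) := by
  obtain ⟨N, t, K, -, h_first, h_last, -, h_lip⟩ := hlam.piecewise_lipschitz
  rw [← h_first, ← h_last]
  exact boundedVariationOn_Icc_of_forall_Icc fun i hi ↦ boundedVariationOn_Icc_of_Ioo <|
    (h_lip i hi).comp_boundedVariationOn (mapsTo_id _)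
      ((BoundedVariationOn.id_Icc _ _).mono Ioo_subset_Icc_self)

theorem IsSimplifiedModel.isWhiteNoiseOn {Ω : Type*} [MeasureSpace Ω] {W η : ℕ → Ω → ℝ}
    (h : IsSimplifiedModel n W η) : IsWhiteNoiseOn η (Iic n) ℙ := by
  obtain ⟨-, hη, h_gauss, -, h_cov, -⟩ := h
  refine ⟨fun j hj ↦ ?_, fun j hj ↦ ?_, fun j hj l hl hjl ↦ ?_⟩
  · obtain ⟨v, hv⟩ := h_gauss 0 (Pi.single j 1)
    have h_single : (fun ω ↦ ∑ l ∈ Finset.range (n + 1),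
        ((0 : ℕ → ℝ) l * W l ω + (Pi.single j 1 : ℕ → ℝ) l * η l ω)) = η j := by
      ext ω
      simp [Pi.single_apply, Nat.lt_succ_of_le (mem_Iic.1 hj)]
    rw [h_single] at hv
    rw [← Function.id_comp (η j),
      ← memLp_map_measure_iff aestronglyMeasurable_id (hη j).aemeasurable, hv]
    exact memLp_id_gaussianReal' 2 (by finiteness)
  · simp only [sq, h_cov j j hj hj, if_true]
  · rw [h_cov j l hj hl, if_neg hjl]

end PreAveraging

theorem preAveragedNoise_second_moments_general (τ : ℝ) {c : ℝ} (hc : 0 < c) {lam : ℝ → ℝ}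
    (hlam : BoundedVariationOn lam (Set.Icc 0 2)) {Ω : ℕ → Type*} [∀ n, MeasurableSpace (Ω n)]
    {μ : ∀ n, Measure (Ω n)} {η : (n : ℕ) → ℕ → Ω n → ℝ}
    (hη : ∀ n, IsWhiteNoiseOn (η n) (Set.Iic n) (μ n)) :
    (∃ C > 0, ∃ N : ℕ, ∀ n ≥ N, ∀ i k : ℕ, 2 ≤ i → i ≤ mOf c n → 2 ≤ k → k ≤ mOf c n →
      2 ≤ |(i : ℤ) - (k : ℤ)| →
      |∫ ω, preAvg lam n (mOf c n) (fun j ω ↦ τ * η n j ω) i ω *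
            preAvg lam n (mOf c n) (fun j ω ↦ τ * η n j ω) k ω ∂μ n| ≤ C / n) ∧
    (∃ C > 0, ∃ N : ℕ, ∀ n ≥ N, ∀ i : ℕ, 2 ≤ i → i ≤ mOf c n →
      |(∫ ω, (preAvg lam n (mOf c n) (fun j ω ↦ τ * η n j ω) i ω) ^ 2 ∂μ n)
          - τ ^ 2 * ((mOf c n : ℝ) / n) * ∫ u in (0:ℝ)..2, (lam u) ^ 2| ≤ C / n) := by
  obtain ⟨M, h_image⟩ := (isBounded_image_of_boundedVariationOn hlam).exists_norm_le
  have hM : ∀ u ∈ Set.Icc (0 : ℝ) 2, |lam u| ≤ M := fun u hu ↦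
    h_image _ (Set.mem_image_of_mem lam hu)
  obtain ⟨N, hN⟩ := exists_nat_ge (c ^ 2)
  have hcn : ∀ n ≥ N, c ^ 2 ≤ n := fun n hn ↦ hN.trans (Nat.cast_le.2 hn)
  have hn_pos : ∀ n ≥ N, 0 < n := fun n hn ↦ Nat.cast_pos.1 ((pow_pos hc 2).trans_le (hcn n hn))
  set V := (eVariationOn ((Set.Icc 0 2).indicator fun u ↦ lam u ^ 2) Set.univ).toReal
  refine ⟨⟨τ ^ 2 * (4 * c ^ 2) * M ^ 2 + 1, by positivity, N, ?_⟩,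
    ⟨τ ^ 2 * (4 * c ^ 2) * V + 1, by positivity, N, ?_⟩⟩
  · intro n hn i k hi him _ _ hik
    exact (abs_integral_preAvg_mul_preAvg_le (hη n) hM (hn_pos n hn)
      (two_pos.trans_le (hi.trans him)) hik τ).trans
      (sq_mul_mOf_div_mul_le hc (hcn n hn) (sq_nonneg M) τ)
  · intro n hn i hi him
    exact (abs_integral_preAvg_sq_sub_le (hη n) hlam (hn_pos n hn)
      (two_pos.trans_le (hi.trans him)) hi him τ).trans
      (sq_mul_mOf_div_mul_le hc (hcn n hn) ENNReal.toReal_nonneg τ)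

theorem preAveragedNoise_second_moments (σ τ c : ℝ) (hσ : 0 < σ) (hτ : 0 < τ) (hc : 0 < c)
    (lam : ℝ → ℝ) (hlam : IsPreAverageFn lam)
    (Ω : ℕ → Type*) [∀ n, MeasureSpace (Ω n)] [∀ n, IsProbabilityMeasure (ℙ : Measure (Ω n))]
    (W η : (n : ℕ) → ℕ → Ω n → ℝ)
    (hmodel : ∀ n, IsSimplifiedModel n (W n) (η n)) :
    (∃ C > 0, ∃ N : ℕ, ∀ n ≥ N, ∀ i k : ℕ, 2 ≤ i → i ≤ mOf c n → 2 ≤ k → k ≤ mOf c n →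
      2 ≤ |(i : ℤ) - (k : ℤ)| →
      |∫ ω, preAvg lam n (mOf c n) (fun j ω => τ * η n j ω) i ω *
            preAvg lam n (mOf c n) (fun j ω => τ * η n j ω) k ω| ≤ C / n) ∧
    (∃ C > 0, ∃ N : ℕ, ∀ n ≥ N, ∀ i : ℕ, 2 ≤ i → i ≤ mOf c n →
      |(∫ ω, (preAvg lam n (mOf c n) (fun j ω => τ * η n j ω) i ω) ^ 2)
          - τ ^ 2 * ((mOf c n : ℝ) / n) * ∫ u in (0:ℝ)..2, (lam u) ^ 2| ≤ C / n) :=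
  preAveragedNoise_second_moments_general τ hc hlam.boundedVariationOn fun n ↦
    (hmodel n).isWhiteNoiseOn
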